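/- For every compact Hausdorff space K, the π-weight of K is at most the spread of the square of K: π(K) ≤ s(K²). -/

import Mathlib

open Cardinal

/-- A π-base for a topological space: a family of nonempty open sets such that every
nonempty open set contains a member of the family. -/
def IsPiBase (K : Type) [TopologicalSpace K] (B : Set (Set K)) : Prop :=
  (∀ b ∈ B, IsOpen b ∧ b.Nonempty) ∧
    ∀ U : Set K, IsOpen U → U.Nonempty → ∃ b ∈ B, b ⊆ U

/-- The π-weight of a topological space: the least cardinality of a π-base. -/
noncomputable def piWeight (K : Type) [TopologicalSpace K] : Cardinal :=
  sInf {c : Cardinal | ∃ B : Set (Set K), IsPiBase K B ∧ c = #B}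

/-- The spread of a topological space: the supremum of the cardinalities of its
discrete subspaces. -/
noncomputable def spread (X : Type) [TopologicalSpace X] : Cardinal :=
  sSup {c : Cardinal | ∃ D : Set X,
    (∀ d ∈ D, ∃ U : Set X, IsOpen U ∧ U ∩ D = {d}) ∧ c = #D}

theorem pw_rec {I T : Type} [LinearOrder I] [WellFoundedLT I] [Nonempty T]
    (P : I → (I → T) → T → Prop)
    (hc : ∀ i f g t, (∀ j < i, f j = g j) → P i f t → P i g t)
    (h : ∀ i f, ∃ t, P i f t) : ∃ F : I → T, ∀ i, P i F (F i) := by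
  classical
  choose c hcc using h
  let ext : (i : I) → ((j : I) → j < i → T) → I → T := fun i f j =>
    if hj : j < i then f j hj else Classical.arbitrary T
  let F : I → T := (wellFounded_lt (α := I)).fix (fun i f => c i (ext i f))
  have hF : ∀ i, F i = c i (ext i (fun j _ => F j)) := fun i =>
    WellFounded.fix_eq _ _ i
  refine ⟨F, fun i => ?_⟩
  rw [hF i]
  refine hc i _ _ _ ?_ (hcc i (ext i (fun j _ => F j)))
  intro j hj
  simp [ext, hj]

theorem pw_card_finset {I : Type} [LinearOrder I] (κ : Cardinal) (hκ : ℵ₀ ≤ κ) (i : I)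
    (hi : #(Set.Iio i) ≤ κ) : #{a : Finset I // ∀ j ∈ a, j < i} ≤ κ := by
  classical
  have h1 : #(Finset (Set.Iio i)) ≤ κ := by
    refine (mk_le_of_surjective (f := fun l : List (Set.Iio i) => l.toFinset) ?_).trans ?_
    · intro s
      exact ⟨s.toList, by simp⟩
    · exact (mk_list_le_max _).trans (max_le hκ hi)
  refine le_trans (mk_le_of_surjective
    (f := fun s : Finset (Set.Iio i) =>
      (⟨s.map (Function.Embedding.subtype _), ?_⟩ : {a : Finset I // ∀ j ∈ a, j < i})) ?_) h1
  · intro j hj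
    simp only [Finset.mem_map] at hj
    obtain ⟨k, _, rfl⟩ := hj
    exact k.2
  · rintro ⟨a, ha⟩
    refine ⟨a.subtype (fun j => j ∈ Set.Iio i), ?_⟩
    ext j
    simp only [Finset.mem_map, Finset.mem_subtype]
    constructor
    · rintro ⟨k, hk, rfl⟩
      exact hk
    · intro hj
      exact ⟨⟨j, ha j hj⟩, hj, rfl⟩

theorem pw_le_spread {X I : Type} [TopologicalSpace X] (x : I → X) (N : I → Set X)
    (ho : ∀ i, IsOpen (N i)) (hm : ∀ i, x i ∈ N i) (hn : ∀ i j, j ≠ i → x j ∉ N i) :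
    #I ≤ spread X := by
  have hinj : Function.Injective x := by
    intro i j hij
    by_contra hne
    exact hn j i hne (hij ▸ hm j)
  rw [← mk_range_eq x hinj]
  refine le_csSup ⟨#X, ?_⟩ ⟨Set.range x, ?_, rfl⟩
  · rintro c ⟨D, _, rfl⟩
    exact mk_set_le D
  · rintro _ ⟨i, rfl⟩
    refine ⟨N i, ho i, ?_⟩
    ext z
    constructor
    · rintro ⟨hz, j, rfl⟩
      by_cases hji : j = i
      · rw [hji]; rfl
      · exact absurd hz (hn i j hji)
    · rintro rfl
      exact ⟨hm i, i, rfl⟩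

theorem pw_case1 {K : Type} [TopologicalSpace K] [CompactSpace K] [T2Space K] [Nonempty K]
    {I : Type} [LinearOrder I] [WellFoundedLT I] (κ : Cardinal) (hκ : ℵ₀ ≤ κ)
    (hI : ∀ i : I, #(Set.Iio i) ≤ κ) (hd : ∀ S : Set K, #S ≤ κ → ¬ Dense S) :
    #I ≤ spread (K × K) := by
  classical
  obtain ⟨F, hF⟩ := pw_rec (I := I) (T := K × K × Set K)
    (fun i f t => t.1 ∈ t.2.2 ∧ IsOpen t.2.2 ∧ t.2.1 ∉ closure t.2.2 ∧
      (∀ j < i, (f j).1 ∉ t.2.2) ∧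
      (∀ j < i, t.1 ∈ (f j).2.2 → t.2.1 ∈ closure (f j).2.2)) (by
      rintro i f g t hfg ⟨h1, h2, h3, h4, h5⟩
      refine ⟨h1, h2, h3, fun j hj => ?_, fun j hj => ?_⟩
      · rw [← hfg j hj]; exact h4 j hj
      · rw [← hfg j hj]; exact h5 j hj) (by
      intro i f
      have hex : ∀ a : {a : Finset I // ∀ j ∈ a, j < i}, ∃ d : K,
          (⋂ j ∈ a.1, (f j).2.2).Nonempty → d ∈ ⋂ j ∈ a.1, (f j).2.2 := by
        intro a
        by_cases h : (⋂ j ∈ a.1, (f j).2.2).Nonempty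
        · exact ⟨h.some, fun _ => h.some_mem⟩
        · exact ⟨Classical.arbitrary K, fun h' => absurd h' h⟩
      choose d hdd using hex
      set S : Set K := Set.range d ∪ (fun j => (f j).1) '' Set.Iio i with hS
      have hScard : #S ≤ κ := by
        refine (mk_union_le _ _).trans (add_le_of_le hκ ?_ ?_)
        · exact mk_range_le.trans (pw_card_finset κ hκ i (hI i))
        · exact mk_image_le.trans (hI i)
      have hnd := hd S hScard
      obtain ⟨x, hx⟩ : ∃ x, x ∉ closure S := by
        by_contra hcon
        push Not at hcon
        exact hnd hcon
      have hUo : IsOpen (closure S)ᶜ := isClosed_closure.isOpen_compl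
      obtain ⟨A, hAo, hxA, hAU⟩ : ∃ A : Set K, IsOpen A ∧ x ∈ A ∧ closure A ⊆ (closure S)ᶜ := by
        obtain ⟨t, ht, htc, hts⟩ := exists_mem_nhds_isClosed_subset (hUo.mem_nhds hx)
        exact ⟨interior t, isOpen_interior, mem_interior_iff_mem_nhds.2 ht,
          (closure_minimal interior_subset htc).trans hts⟩
      have hy : (closure S ∩ ⋂ j : I, ⋂ (_ : j < i ∧ x ∈ (f j).2.2),
          closure (f j).2.2).Nonempty := by
        by_contra hemp
        rw [Set.not_nonempty_iff_eq_empty] at hemp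
        obtain ⟨u, hu⟩ := (isClosed_closure (s := S)).isCompact.elim_finite_subfamily_closed
          (fun j : I => ⋂ (_ : j < i ∧ x ∈ (f j).2.2), closure (f j).2.2)
          (fun j => isClosed_iInter fun _ => isClosed_closure) hemp
        let a : {a : Finset I // ∀ j ∈ a, j < i} :=
          ⟨u.filter (fun j => j < i ∧ x ∈ (f j).2.2), fun j hj => (Finset.mem_filter.1 hj).2.1⟩
        have hda := hdd a ⟨x, by
          simp only [Set.mem_iInter]
          intro j hj
          exact (Finset.mem_filter.1 hj).2.2⟩
        simp only [Set.mem_iInter] at hda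
        have : d a ∈ (∅ : Set K) := by
          rw [← hu]
          refine ⟨subset_closure (Or.inl ⟨a, rfl⟩), ?_⟩
          simp only [Set.mem_iInter]
          intro j hj hj2
          exact subset_closure (hda j (Finset.mem_filter.2 ⟨hj, hj2⟩))
        exact this
      obtain ⟨y, hyS, hy⟩ := hy
      simp only [Set.mem_iInter] at hy
      refine ⟨(x, y, A), hxA, hAo, fun h => hAU h hyS, fun j hj h => ?_, fun j hj h => hy j ⟨hj, h⟩⟩
      exact hAU (subset_closure h) (subset_closure (Or.inr ⟨j, hj, rfl⟩)))
  refine pw_le_spread (fun i => ((F i).1, (F i).2.1))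
    (fun i => (F i).2.2 ×ˢ (closure (F i).2.2)ᶜ) ?_ ?_ ?_
  · intro i
    exact (hF i).2.1.prod isClosed_closure.isOpen_compl
  · intro i
    exact ⟨(hF i).1, (hF i).2.2.1⟩
  · rintro i j hne ⟨h1, h2⟩
    rcases lt_or_gt_of_ne hne with h | h
    · exact (hF i).2.2.2.1 j h h1
    · exact h2 ((hF j).2.2.2.2 i h h1)

theorem pw_case2 {K : Type} [TopologicalSpace K] [CompactSpace K] [T2Space K]
    {I : Type} [LinearOrder I] [WellFoundedLT I] [NoMaxOrder I] (κ : Cardinal) (hκ : ℵ₀ ≤ κ)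
    (hI : ∀ i : I, #(Set.Iio i) ≤ κ) (p : K)
    (hp : ∀ B : Set (Set K), #B ≤ κ → (∀ b ∈ B, IsOpen b ∧ b.Nonempty) →
      ∃ U, IsOpen U ∧ p ∈ U ∧ ∀ b ∈ B, ¬ b ⊆ U) :
    #I ≤ spread (K × K) := by
  classical
  have hreg : ∀ U : Set K, IsOpen U → p ∈ U → ∃ A : Set K, IsOpen A ∧ p ∈ A ∧ closure A ⊆ U := by
    intro U hUo hx
    obtain ⟨t, ht, htc, hts⟩ := exists_mem_nhds_isClosed_subset (hUo.mem_nhds hx)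
    exact ⟨interior t, isOpen_interior, mem_interior_iff_mem_nhds.2 ht,
      (closure_minimal interior_subset htc).trans hts⟩
  let W : (I → Set K × Set K) → Finset I → Finset I → Set K := fun f a b =>
    (⋂ j ∈ a, (f j).2) ∩ ⋂ j ∈ b, (closure (f j).1)ᶜ
  obtain ⟨F, hF⟩ := pw_rec (I := I) (T := Set K × Set K)
    (fun i f t => IsOpen t.1 ∧ IsOpen t.2 ∧ p ∈ t.2 ∧ closure t.2 ⊆ t.1 ∧
      ∀ a b : Finset I, (∀ j ∈ a, j < i) → (∀ j ∈ b, j < i) →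
        IsOpen (W f a b) → (W f a b).Nonempty → ¬ W f a b ⊆ closure t.1) (by
      rintro i f g t hfg ⟨h1, h2, h3, h4, h5⟩
      refine ⟨h1, h2, h3, h4, fun a b ha hb => ?_⟩
      have : W g a b = W f a b := by
        simp only [W]
        congr 1
        · exact Set.iInter₂_congr fun j hj => by rw [hfg j (ha j hj)]
        · exact Set.iInter₂_congr fun j hj => by rw [hfg j (hb j hj)]
      rw [this]
      exact h5 a b ha hb) (by
      intro i f
      let Q := {a : Finset I // ∀ j ∈ a, j < i}
      have hQ : #Q ≤ κ := pw_card_finset κ hκ i (hI i)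
      let B : Set (Set K) := {w | w ∈ Set.range (fun q : Q × Q => W f q.1.1 q.2.1) ∧
        (IsOpen w ∧ w.Nonempty)}
      have hB : #B ≤ κ := by
        refine (mk_le_mk_of_subset (t := Set.range (fun q : Q × Q => W f q.1.1 q.2.1))
          fun w hw => hw.1).trans (mk_range_le.trans ?_)
        rw [mk_prod, lift_id]
        exact (mul_le_mul' hQ hQ).trans (mul_eq_self hκ).le
      obtain ⟨U', hU'o, hpU', hU'⟩ := hp B hB fun b hb => hb.2
      obtain ⟨U, hUo, hpU, hUU'⟩ := hreg U' hU'o hpU'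
      obtain ⟨V, hVo, hpV, hVU⟩ := hreg U hUo hpU
      refine ⟨(U, V), hUo, hVo, hpV, hVU, fun a b ha hb hWo hWn hsub => ?_⟩
      exact hU' _ ⟨⟨(⟨a, ha⟩, ⟨b, hb⟩), rfl⟩, hWo, hWn⟩ (hsub.trans hUU'))
  have hWo : ∀ a b, IsOpen (W F a b) := fun a b =>
    (isOpen_biInter_finset fun j _ => (hF j).2.1).inter
      (isOpen_biInter_finset fun j _ => isClosed_closure.isOpen_compl)
  have hW : ∀ (a b : Finset I), (∀ j ∈ a, ∀ k ∈ b, j < k) → (W F a b).Nonempty := by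
    intro a b
    induction b using Finset.induction_on_max with
    | empty =>
      intro _
      refine ⟨p, ?_, by simp⟩
      simp only [Set.mem_iInter]
      exact fun j _ => (hF j).2.2.1
    | insert m b hm ih =>
      intro hab
      have hn := ih fun j hj k hk => hab j hj k (Finset.mem_insert_of_mem hk)
      have := (hF m).2.2.2.2 a b (fun j hj => hab j hj m (Finset.mem_insert_self _ _)) hm
        (hWo a b) hn
      obtain ⟨z, hz, hzn⟩ := Set.not_subset.1 this
      refine ⟨z, hz.1, ?_⟩
      have hz2 := hz.2
      simp only [Set.mem_iInter] at hz2 ⊢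
      intro j hj
      rcases Finset.mem_insert.1 hj with rfl | hj
      · exact hzn
      · exact hz2 j hj
  have hx : ∀ i : I, ∃ x : K, (∀ j ≤ i, x ∈ closure (F j).2) ∧ ∀ j, i < j → x ∉ (F j).1 := by
    intro i
    have : (Set.univ ∩ ⋂ j : I, if j ≤ i then closure (F j).2 else ((F j).1)ᶜ).Nonempty := by
      by_contra hemp
      rw [Set.not_nonempty_iff_eq_empty] at hemp
      obtain ⟨u, hu⟩ := isCompact_univ.elim_finite_subfamily_closed
        (fun j : I => if j ≤ i then closure (F j).2 else ((F j).1)ᶜ) (fun j => by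
          split_ifs
          · exact isClosed_closure
          · exact (hF j).1.isClosed_compl) hemp
      obtain ⟨z, hz1, hz2⟩ := hW (u.filter (fun j => j ≤ i)) (u.filter (fun j => i < j))
        (fun j hj k hk => (Finset.mem_filter.1 hj).2.trans_lt (Finset.mem_filter.1 hk).2)
      simp only [Set.mem_iInter, Finset.mem_filter] at hz1 hz2
      have : z ∈ (∅ : Set K) := by
        rw [← hu]
        refine ⟨trivial, ?_⟩
        simp only [Set.mem_iInter]
        intro j hj
        split_ifs with h
        · exact subset_closure (hz1 j ⟨hj, h⟩)
        · exact fun hzj => hz2 j ⟨hj, not_le.1 h⟩ (subset_closure hzj)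
      exact this
    obtain ⟨x, -, hx⟩ := this
    simp only [Set.mem_iInter] at hx
    refine ⟨x, fun j hj => ?_, fun j hj => ?_⟩
    · have := hx j
      rwa [if_pos hj] at this
    · have := hx j
      rwa [if_neg (not_le.2 hj)] at this
  choose x hx1 hx2 using hx
  have hs : ∀ i : I, ∃ s, i < s ∧ ∀ j, i < j → s ≤ j := by
    intro i
    obtain ⟨k, hk⟩ := exists_gt i
    refine ⟨(wellFounded_lt (α := I)).min (Set.Ioi i) ⟨k, hk⟩,
      (wellFounded_lt (α := I)).min_mem (Set.Ioi i) ⟨k, hk⟩, fun j hj => ?_⟩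
    exact not_lt.1 ((wellFounded_lt (α := I)).not_lt_min (Set.Ioi i) hj)
  choose s hs1 hs2 using hs
  refine pw_le_spread (fun i => (x i, x i))
    (fun i => ((F i).1 ∩ (closure (F (s i)).2)ᶜ) ×ˢ Set.univ) ?_ ?_ ?_
  · intro i
    exact ((hF i).1.inter isClosed_closure.isOpen_compl).prod isOpen_univ
  · intro i
    refine ⟨⟨(hF i).2.2.2.1 (hx1 i i le_rfl), fun h => ?_⟩, trivial⟩
    exact hx2 i (s i) (hs1 i) ((hF (s i)).2.2.2.1 h)
  · rintro i j hne ⟨⟨h1, h2⟩, -⟩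
    rcases lt_or_gt_of_ne hne with h | h
    · exact hx2 j i h h1
    · exact h2 (hx1 j (s i) (hs2 i j h))

/-- For every compact Hausdorff space `K`, `π(K) ≤ s(K²)`. -/
theorem piWeight_le_spread_sq (K : Type) [TopologicalSpace K] [CompactSpace K] [T2Space K] :
    piWeight K ≤ spread (K × K) := by
  have hpi : ∀ B : Set (Set K), IsPiBase K B → piWeight K ≤ #B := fun B hB =>
    csInf_le' ⟨B, hB, rfl⟩
  rcases finite_or_infinite K with hfin | hinf
  · have h1 : #K ≤ spread (K × K) :=
      pw_le_spread (fun k => (k, k)) (fun k => {k} ×ˢ Set.univ)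
        (fun k => (isOpen_discrete _).prod isOpen_univ) (fun k => ⟨rfl, trivial⟩)
        (fun i j hne h => hne h.1)
    refine le_trans ((hpi (Set.range fun k : K => {k}) ⟨?_, ?_⟩).trans mk_range_le) h1
    · rintro _ ⟨k, rfl⟩
      exact ⟨isOpen_discrete _, Set.singleton_nonempty k⟩
    · rintro U _ ⟨k, hk⟩
      exact ⟨{k}, ⟨k, rfl⟩, Set.singleton_subset_iff.2 hk⟩
  · by_contra hcon
    rw [not_le] at hcon
    set κ := spread (K × K) with hκdef
    have hκ : ℵ₀ ≤ κ := by
      obtain ⟨U, hUinf, hUo, hUd⟩ := exists_seq_infinite_isOpen_pairwise_disjoint K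
      choose x hx using fun n => (hUinf n).nonempty
      rw [← mk_nat]
      refine pw_le_spread (fun n => (x n, x n)) (fun n => U n ×ˢ Set.univ)
        (fun n => (hUo n).prod isOpen_univ) (fun n => ⟨hx n, trivial⟩) (fun i j hne h => ?_)
      exact Set.disjoint_left.1 (hUd hne) (hx j) h.1
    let I := (Order.succ κ).ord.ToType
    have hIc : #I = Order.succ κ := mk_ord_toType _
    have hI : ∀ i : I, #(Set.Iio i) ≤ κ := fun i =>
      Order.lt_succ_iff.1 (mk_Iio_toType_ord_lt i)
    have hno : ¬ #I ≤ κ := by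
      rw [hIc, not_le]
      exact Order.lt_succ κ
    have : NoMaxOrder I := Cardinal.noMaxOrder (hκ.trans (Order.le_succ κ))
    by_cases hd : ∀ S : Set K, #S ≤ κ → ¬ Dense S
    · exact hno (pw_case1 κ hκ hI hd)
    · push Not at hd
      obtain ⟨S, hS, hSd⟩ := hd
      by_cases hp : ∀ p ∈ S, ∃ B : Set (Set K), #B ≤ κ ∧ (∀ b ∈ B, IsOpen b ∧ b.Nonempty) ∧
          ∀ U, IsOpen U → p ∈ U → ∃ b ∈ B, b ⊆ U
      · choose! B hB1 hB2 hB3 using hp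
        refine absurd (hpi (⋃ p : S, B p) ⟨?_, ?_⟩) (not_le.2 (lt_of_le_of_lt ?_ hcon))
        · intro b hb
          obtain ⟨p, hb⟩ := Set.mem_iUnion.1 hb
          exact hB2 p p.2 b hb
        · intro U hU hUn
          obtain ⟨p, hpU, hpS⟩ := hSd.inter_open_nonempty U hU hUn
          obtain ⟨b, hb, hbU⟩ := hB3 p hpS U hU hpU
          exact ⟨b, Set.mem_iUnion.2 ⟨⟨p, hpS⟩, hb⟩, hbU⟩
        · refine (mk_iUnion_le _).trans ?_
          refine (mul_le_mul' hS (ciSup_le' fun p : S => hB1 p p.2)).trans (mul_eq_self hκ).le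
      · push Not at hp
        obtain ⟨p, -, hp⟩ := hp
        exact hno (pw_case2 κ hκ hI p hp)
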